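/- For any nonnegative tensor T of order m ≥ 2 and dimension n ≥ 2, the spectral radius ρ(T) is itself an eigenvalue of T, and there is a nonnegative real eigenvector x ∈ ℝ^n_+ \ {0} with (T x^{m-1})_i = ρ(T) x_i^{m-1} for all i. -/

import Mathlib

open Finset

/-- `(T x^{m-1})_i` for an order-`(k+1)` tensor encoded by its first index
and the `k` trailing indices (so for an order-`m` tensor, `k = m - 1`). -/
def tapp {ι : Type*} [Fintype ι] {k : ℕ} (T : ι → (Fin k → ι) → ℝ) (x : ι → ℝ) (i : ι) : ℝ :=
  ∑ β : Fin k → ι, T i β * ∏ l, x (β l)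

/-- All entries of the tensor are nonnegative. -/
def TNonneg {ι : Type*} {k : ℕ} (T : ι → (Fin k → ι) → ℝ) : Prop :=
  ∀ i β, 0 ≤ T i β

/-- `T` is strictly nonnegative: nonnegative, and `T x^{m-1} > 0` whenever `x > 0`. -/
def TStrictlyNonneg {ι : Type*} [Fintype ι] {k : ℕ} (T : ι → (Fin k → ι) → ℝ) : Prop :=
  TNonneg T ∧ ∀ x : ι → ℝ, (∀ i, 0 < x i) → ∀ i, 0 < tapp T x i

/-- Representation matrix `G(T)`: `G(T)_{ij}` is the sum of all `T_{i i₂…i_m}` with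
`j ∈ {i₂,…,i_m}`. -/
def repMat {ι : Type*} [Fintype ι] [DecidableEq ι] {k : ℕ}
    (T : ι → (Fin k → ι) → ℝ) : Matrix ι ι ℝ :=
  fun i j => ∑ β : Fin k → ι, if ∃ l, β l = j then T i β else 0

/-- Majorization matrix `M(T)`: `M(T)_{ij} = T_{i j j … j}`. -/
def majMat {ι : Type*} {k : ℕ} (T : ι → (Fin k → ι) → ℝ) : Matrix ι ι ℝ :=
  fun i j => T i (fun _ => j)

/-- A square matrix is reducible if some nonempty proper index subset `I` satisfies
`A i j = 0` for all `i ∈ I`, `j ∉ I`. -/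
def MatReducible {ι : Type*} [Fintype ι] (A : Matrix ι ι ℝ) : Prop :=
  ∃ I : Finset ι, I.Nonempty ∧ I ≠ Finset.univ ∧ ∀ i ∈ I, ∀ j ∉ I, A i j = 0

def MatIrreducible {ι : Type*} [Fintype ι] (A : Matrix ι ι ℝ) : Prop :=
  ¬ MatReducible A

/-- A square nonnegative matrix is primitive if some positive power is entrywise positive. -/
def MatPrimitive {ι : Type*} [Fintype ι] [DecidableEq ι] (A : Matrix ι ι ℝ) : Prop :=
  ∃ p : ℕ, 0 < p ∧ ∀ i j, 0 < (A ^ p) i j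

/-- `lam ∈ ℂ` is an eigenvalue of `T`:
`(T x^{m-1})_i = lam * x_i^{m-1}` for some nonzero `x ∈ ℂⁿ`. -/
def TIsEig {ι : Type*} [Fintype ι] {k : ℕ} (T : ι → (Fin k → ι) → ℝ) (lam : ℂ) : Prop :=
  ∃ x : ι → ℂ, x ≠ 0 ∧
    ∀ i, (∑ β : Fin k → ι, (T i β : ℂ) * ∏ l, x (β l)) = lam * x i ^ k

/-- Spectral radius: the supremum of moduli of eigenvalues. -/
noncomputable def specRad {ι : Type*} [Fintype ι] {k : ℕ}
    (T : ι → (Fin k → ι) → ℝ) : ℝ :=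
  sSup {r : ℝ | ∃ lam : ℂ, TIsEig T lam ∧ r = ‖lam‖}

/-- Induced tensor `T_I` on a subset `I` of the index set. -/
def inducedT {ι : Type*} {k : ℕ} (T : ι → (Fin k → ι) → ℝ) (I : Finset ι) :
    {i // i ∈ I} → (Fin k → {i // i ∈ I}) → ℝ :=
  fun i β => T i.val (fun l => (β l).val)

/-- The identity tensor: `E_{i₁…i_m} = 1` if all indices coincide, `0` otherwise. -/
def idT (ι : Type*) [DecidableEq ι] (k : ℕ) : ι → (Fin k → ι) → ℝ :=
  fun i β => if ∀ l, β l = i then 1 else 0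

/-- A tensor is reducible if some nonempty proper index subset `I` satisfies
`T_{i₁ i₂ … i_m} = 0` for all `i₁ ∈ I` and `i₂, …, i_m ∉ I`. -/
def TReducible {ι : Type*} [Fintype ι] {k : ℕ} (T : ι → (Fin k → ι) → ℝ) : Prop :=
  ∃ I : Finset ι, I.Nonempty ∧ I ≠ Finset.univ ∧
    ∀ i ∈ I, ∀ β : Fin k → ι, (∀ l, β l ∉ I) → T i β = 0

/-- The map `F_T(x)_i = ((T x^{m-1})_i)^{1/(m-1)}` (here `k = m - 1`). -/
noncomputable def FT {ι : Type*} [Fintype ι] {k : ℕ}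
    (T : ι → (Fin k → ι) → ℝ) (x : ι → ℝ) : ι → ℝ :=
  fun i => (tapp T x i) ^ ((k : ℝ)⁻¹)

/-- A tensor is primitive if some iterate of `F_T` is entrywise positive on every
nonzero nonnegative vector. -/
def TPrimitive {ι : Type*} [Fintype ι] {k : ℕ} (T : ι → (Fin k → ι) → ℝ) : Prop :=
  ∃ p : ℕ, 0 < p ∧ ∀ x : ι → ℝ, (∀ i, 0 ≤ x i) → x ≠ 0 → ∀ i, 0 < (FT T)^[p] x i

/-- `T` is weakly positive: all off-diagonal entries of `M(T)` are positive. -/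
def TWeaklyPositive {ι : Type*} {k : ℕ} (T : ι → (Fin k → ι) → ℝ) : Prop :=
  ∀ i j, i ≠ j → 0 < T i (fun _ => j)

/-- `T` is essentially positive: `T x^{m-1} > 0` for every nonzero `x ≥ 0`. -/
def TEssentiallyPositive {ι : Type*} [Fintype ι] {k : ℕ} (T : ι → (Fin k → ι) → ℝ) : Prop :=
  ∀ x : ι → ℝ, (∀ i, 0 ≤ x i) → x ≠ 0 → ∀ i, 0 < tapp T x i

/-- Hilbert's projective metric between two positive vectors:
`d(u,v) = log (max_i v_i/u_i) - log (min_i v_i/u_i)`. -/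
noncomputable def hilbertD {n : ℕ} (hn : 0 < n) (u v : Fin n → ℝ) : ℝ :=
  Real.log ((Finset.univ : Finset (Fin n)).sup' ⟨⟨0, hn⟩, Finset.mem_univ _⟩
      (fun i => v i / u i)) -
  Real.log ((Finset.univ : Finset (Fin n)).inf' ⟨⟨0, hn⟩, Finset.mem_univ _⟩
      (fun i => v i / u i))

/-!
Among all pairs `(l, x)` with `l ≥ 0`, `x` in the standard simplex and `l x_i^k ≤ (T x^k)_i` for
all `i`, choose one with `l` maximal; the maximum exists by compactness. If `T` is entrywise
positive, then all these inequalities are equalities: if the `j`-th one were strict, raising `x_j`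
slightly would preserve it and make every other one strict, leaving room to increase `l`.
A nonnegative `T` is the limit of the positive tensors `T + ε`, and by compactness their maximal
eigenpairs accumulate at a maximal eigenpair of `T`. The triangle inequality turns any complex
eigenpair `(λ, z)` into the competitor `(|λ|, |z|)`, so the maximal `l` is the spectral radius.
-/

open Set Filter Topology

section

variable {ι : Type*} [Fintype ι] {k : ℕ} {S T : ι → (Fin k → ι) → ℝ} {l : ℝ} {x y : ι → ℝ}

theorem ne_zero_of_mem_stdSimplex {𝕜 : Type*} [Semiring 𝕜] [PartialOrder 𝕜] [Nontrivial 𝕜]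
    {x : ι → 𝕜} (hx : x ∈ stdSimplex 𝕜 ι) : x ≠ 0 := by
  rintro rfl
  simpa using hx.2

theorem continuous_tapp (i : ι) :
    Continuous fun p : (ι → (Fin k → ι) → ℝ) × (ι → ℝ) => tapp p.1 p.2 i := by
  unfold tapp
  fun_prop

theorem tapp_smul (T : ι → (Fin k → ι) → ℝ) (c : ℝ) (x : ι → ℝ) (i : ι) :
    tapp T (c • x) i = c ^ k * tapp T x i := by
  simp only [tapp, Pi.smul_apply, smul_eq_mul, prod_mul_distrib, prod_const, card_univ,
    Fintype.card_fin, mul_sum, mul_left_comm]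

theorem tapp_nonneg (hT : TNonneg T) (hx : 0 ≤ x) (i : ι) : 0 ≤ tapp T x i :=
  sum_nonneg fun β _ => mul_nonneg (hT i β) (prod_nonneg fun r _ => hx (β r))

theorem tapp_le_tapp_left (hST : ∀ i β, S i β ≤ T i β) (hx : 0 ≤ x) (i : ι) :
    tapp S x i ≤ tapp T x i :=
  sum_le_sum fun β _ => mul_le_mul_of_nonneg_right (hST i β) (prod_nonneg fun r _ => hx (β r))

theorem tapp_le_tapp_right (hT : TNonneg T) (hx : 0 ≤ x) (hxy : x ≤ y) (i : ι) :
    tapp T x i ≤ tapp T y i :=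
  sum_le_sum fun β _ => mul_le_mul_of_nonneg_left
    (prod_le_prod (fun r _ => hx (β r)) fun r _ => hxy (β r)) (hT i β)

theorem tapp_lt_tapp_right (hk : k ≠ 0) (hT : ∀ i β, 0 < T i β) (hx : 0 ≤ x) (hxy : x < y)
    (i : ι) : tapp T x i < tapp T y i := by
  obtain ⟨hle, j, hj⟩ := Pi.lt_def.1 hxy
  refine sum_lt_sum (fun β _ => mul_le_mul_of_nonneg_left
    (prod_le_prod (fun r _ => hx (β r)) fun r _ => hle (β r)) (hT i β).le)
    ⟨fun _ => j, mem_univ _, mul_lt_mul_of_pos_left ?_ (hT i _)⟩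
  simpa only [prod_const, card_univ, Fintype.card_fin] using pow_lt_pow_left₀ hj (hx j) hk

/-- The competitors `(l, x)` of the Collatz–Wielandt maximization of `l` for an order-`(k+1)`
tensor. Vectors are normalized to lie in the standard simplex, to make the set of competitors
compact. -/
structure IsSubEigenpair (T : ι → (Fin k → ι) → ℝ) (l : ℝ) (x : ι → ℝ) : Prop where
  nonneg : 0 ≤ l
  mem_stdSimplex : x ∈ stdSimplex ℝ ι
  le_tapp : ∀ i, l * x i ^ k ≤ tapp T x i

/-- A Perron pair is a sub-eigenpair that maximizes `l` and is an actual eigenpair. For a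
nonnegative tensor, its value `l` is the spectral radius. -/
structure IsPerronPair (T : ι → (Fin k → ι) → ℝ) (l : ℝ) (x : ι → ℝ) : Prop extends
    IsSubEigenpair T l x where
  tapp_eq : ∀ i, tapp T x i = l * x i ^ k
  maximal : ∀ l' x', IsSubEigenpair T l' x' → l' ≤ l

theorem IsSubEigenpair.mono (hST : ∀ i β, S i β ≤ T i β) (h : IsSubEigenpair S l x) :
    IsSubEigenpair T l x where
  nonneg := h.nonneg
  mem_stdSimplex := h.mem_stdSimplex
  le_tapp i := (h.le_tapp i).trans (tapp_le_tapp_left hST h.mem_stdSimplex.1 i)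

theorem IsSubEigenpair.le_sum_tapp_one (hT : TNonneg T) (h : IsSubEigenpair T l x) :
    l ≤ ∑ i, tapp T 1 i := by
  have hx : 0 ≤ x := h.mem_stdSimplex.1
  obtain ⟨j, hj⟩ := Function.ne_iff.1 (ne_zero_of_mem_stdSimplex h.mem_stdSimplex)
  have : Nonempty ι := ⟨j⟩
  obtain ⟨i, hi⟩ := Finite.exists_max x
  have hxi : 0 < x i := ((hx j).lt_of_ne' hj).trans_le (hi j)
  have hle : x ≤ x i • (1 : ι → ℝ) := fun j => by simpa using hi j
  have key : l * x i ^ k ≤ tapp T 1 i * x i ^ k := calc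
    l * x i ^ k ≤ tapp T x i := h.le_tapp i
    _ ≤ tapp T (x i • 1) i := tapp_le_tapp_right hT hx hle i
    _ = tapp T 1 i * x i ^ k := by rw [tapp_smul, mul_comm]
  exact (le_of_mul_le_mul_right key (pow_pos hxi k)).trans
    (single_le_sum (fun i _ => tapp_nonneg hT zero_le_one i) (mem_univ i))

theorem exists_isSubEigenpair_of_forall_le (hl : 0 ≤ l) (hx : 0 ≤ x) (hx₀ : x ≠ 0)
    (h : ∀ i, l * x i ^ k ≤ tapp T x i) : ∃ y, IsSubEigenpair T l y := by
  have hs : 0 < ∑ i, x i := Fintype.sum_pos (hx.lt_of_ne' hx₀)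
  refine ⟨(∑ i, x i)⁻¹ • x, hl, ⟨fun i => mul_nonneg (inv_nonneg.2 hs.le) (hx i), ?_⟩, fun i => ?_⟩
  · simp only [Pi.smul_apply, smul_eq_mul, ← mul_sum, inv_mul_cancel₀ hs.ne']
  · rw [tapp_smul, Pi.smul_apply, smul_eq_mul, mul_pow, mul_left_comm]
    gcongr
    exact h i

theorem isCompact_setOf_isSubEigenpair {K : Set (ι → (Fin k → ι) → ℝ)} (hK : IsCompact K)
    (hK₀ : ∀ T ∈ K, TNonneg T) :
    IsCompact {p : (ι → (Fin k → ι) → ℝ) × ℝ × (ι → ℝ) |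
      p.1 ∈ K ∧ IsSubEigenpair p.1 p.2.1 p.2.2} := by
  have hcont : Continuous fun T : ι → (Fin k → ι) → ℝ => ∑ i, tapp T 1 i :=
    continuous_finsetSum _ fun i _ => (continuous_tapp i).comp (.prodMk_left 1)
  obtain ⟨B, hB⟩ := hK.bddAbove_image hcont.continuousOn
  have hclosed : IsClosed {p : (ι → (Fin k → ι) → ℝ) × ℝ × (ι → ℝ) |
      ∀ i, p.2.1 * p.2.2 i ^ k ≤ tapp p.1 p.2.2 i} := by
    simp only [ofPred_forall]
    exact isClosed_iInter fun i => isClosed_le (by fun_prop)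
      ((continuous_tapp i).comp (continuous_fst.prodMk continuous_snd.snd))
  convert (hK.prod ((isCompact_Icc (a := 0) (b := B)).prod
    (isCompact_stdSimplex ℝ ι))).inter_right hclosed using 1
  ext ⟨T, l, x⟩
  constructor
  · rintro ⟨hTK, h⟩
    have hlB : l ≤ B := (h.le_sum_tapp_one (hK₀ T hTK)).trans (hB (mem_image_of_mem _ hTK))
    exact ⟨⟨hTK, ⟨h.nonneg, hlB⟩, h.mem_stdSimplex⟩, h.le_tapp⟩
  · rintro ⟨⟨hTK, ⟨hl, -⟩, hx⟩, h⟩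
    exact ⟨hTK, hl, hx, h⟩

theorem exists_isSubEigenpair_maximal [Nonempty ι] (hT : TNonneg T) :
    ∃ l x, IsSubEigenpair T l x ∧ ∀ l' x', IsSubEigenpair T l' x' → l' ≤ l := by
  obtain ⟨y, hy⟩ : ∃ y, IsSubEigenpair T 0 y :=
    exists_isSubEigenpair_of_forall_le le_rfl zero_le_one one_ne_zero fun i => by
      simpa only [zero_mul] using tapp_nonneg hT zero_le_one i
  have hcomp := isCompact_setOf_isSubEigenpair (isCompact_singleton (x := T))
    (by rintro _ rfl; exact hT)
  obtain ⟨⟨_, l, x⟩, ⟨rfl, h⟩, hmax⟩ :=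
    hcomp.exists_isMaxOn ⟨(T, 0, y), rfl, hy⟩ (f := fun p => p.2.1) (by fun_prop)
  exact ⟨l, x, h, fun l' x' h' => hmax (a := (_, l', x')) ⟨rfl, h'⟩⟩

theorem exists_forall_lt_tapp (hk : k ≠ 0) (hT : ∀ i β, 0 < T i β) (hx : 0 ≤ x)
    (h : ∀ i, l * x i ^ k ≤ tapp T x i) {j : ι} (hj : l * x j ^ k < tapp T x j) :
    ∃ y, 0 < y ∧ ∀ i, l * y i ^ k < tapp T y i := by
  classical
  let raise (ε : ℝ) : ι → ℝ := x + Pi.single j ε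
  have hraise : Continuous raise := continuous_const.add (continuous_single (A := fun _ => ℝ) j)
  have hev : ∀ᶠ ε in 𝓝[>] 0, l * raise ε j ^ k < tapp T (raise ε) j := by
    refine nhdsWithin_le_nhds (ContinuousAt.eventually_lt ?_ ?_ ?_)
    · exact (by fun_prop : Continuous fun ε => l * raise ε j ^ k).continuousAt
    · exact ((continuous_tapp j).comp (continuous_const.prodMk hraise)).continuousAt
    · simpa only [raise, Pi.single_zero, add_zero] using hj
  obtain ⟨ε, hεj, hε : 0 < ε⟩ := (hev.and self_mem_nhdsWithin).exists
  have hlt : x < raise ε := lt_add_of_pos_right x (Pi.single_pos.2 hε)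
  refine ⟨raise ε, hx.trans_lt hlt, fun i => ?_⟩
  obtain rfl | hij := eq_or_ne i j
  · exact hεj
  · have hi : raise ε i = x i := by simp [raise, hij]
    rw [hi]
    exact (h i).trans_lt (tapp_lt_tapp_right hk hT hx hlt i)

theorem exists_isSubEigenpair_gt (hl : 0 ≤ l) (hx : 0 < x)
    (h : ∀ i, l * x i ^ k < tapp T x i) : ∃ l' > l, ∃ y, IsSubEigenpair T l' y := by
  have hev : ∀ᶠ l' in 𝓝[>] l, ∀ i, l' * x i ^ k < tapp T x i :=
    eventually_all.2 fun i => nhdsWithin_le_nhds <|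
      (continuous_mul_const (x i ^ k)).continuousAt.eventually_lt_const (h i)
  obtain ⟨l', hl'x, hl' : l < l'⟩ := (hev.and self_mem_nhdsWithin).exists
  exact ⟨l', hl',
    exists_isSubEigenpair_of_forall_le (hl.trans hl'.le) hx.le hx.ne' fun i => (hl'x i).le⟩

theorem IsSubEigenpair.isPerronPair_of_pos (hk : k ≠ 0) (hT : ∀ i β, 0 < T i β)
    (h : IsSubEigenpair T l x) (hmax : ∀ l' x', IsSubEigenpair T l' x' → l' ≤ l) :
    IsPerronPair T l x := by
  refine ⟨h, fun j => ((h.le_tapp j).eq_of_not_lt fun hj => ?_).symm, hmax⟩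
  obtain ⟨y, hy, hly⟩ := exists_forall_lt_tapp hk hT h.mem_stdSimplex.1 h.le_tapp hj
  obtain ⟨l', hl', z, hz⟩ := exists_isSubEigenpair_gt h.nonneg hy hly
  exact (hmax l' z hz).not_gt hl'

theorem exists_isPerronPair_of_pos [Nonempty ι] (hk : k ≠ 0) (hT : ∀ i β, 0 < T i β) :
    ∃ l x, IsPerronPair T l x :=
  have ⟨l, x, h, hmax⟩ := exists_isSubEigenpair_maximal fun i β => (hT i β).le
  ⟨l, x, h.isPerronPair_of_pos hk hT hmax⟩

theorem exists_isPerronPair [Nonempty ι] (hk : k ≠ 0) (hT : TNonneg T) :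
    ∃ l x, IsPerronPair T l x := by
  let perturb (ε : ℝ) : ι → (Fin k → ι) → ℝ := fun i β => T i β + ε
  have hperturb : Continuous perturb := by fun_prop
  have hcomp := isCompact_setOf_isSubEigenpair ((isCompact_Icc (a := 0) (b := 1)).image hperturb)
    (by rintro _ ⟨ε, hε, rfl⟩ i β; exact add_nonneg (hT i β) hε.1)
  -- Only sub-eigenpairs of the fixed tensor `T` are dominated here, so that this set is closed.
  have hclosed : IsClosed {p : (ι → (Fin k → ι) → ℝ) × ℝ × (ι → ℝ) |
      (∀ i, tapp p.1 p.2.2 i = p.2.1 * p.2.2 i ^ k) ∧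
        ∀ l' x', IsSubEigenpair T l' x' → l' ≤ p.2.1} := by
    simp only [ofPred_and, ofPred_forall]
    refine (isClosed_iInter fun i => isClosed_eq ?_ (by fun_prop)).inter
      (isClosed_iInter fun l' => isClosed_iInter fun x' => isClosed_iInter fun _ =>
        isClosed_le continuous_const continuous_snd.fst)
    exact (continuous_tapp i).comp (continuous_fst.prodMk continuous_snd.snd)
  have himage := ((hcomp.inter_right hclosed).image continuous_fst).isClosed
  have hlim : Tendsto perturb (𝓝[>] 0) (𝓝 T) := by
    simpa only [perturb, add_zero] using (hperturb.tendsto 0).mono_left nhdsWithin_le_nhds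
  obtain ⟨⟨_, l, x⟩, ⟨⟨-, h⟩, heq, hmax⟩, rfl⟩ := himage.mem_of_tendsto hlim <| by
    filter_upwards [Ioc_mem_nhdsGT one_pos] with ε hε
    obtain ⟨l, x, h⟩ := exists_isPerronPair_of_pos (T := perturb ε) hk
      fun i β => add_pos_of_nonneg_of_pos (hT i β) hε.1
    exact ⟨(perturb ε, l, x), ⟨⟨mem_image_of_mem _ ⟨hε.1.le, hε.2⟩, h.toIsSubEigenpair⟩, h.tapp_eq,
      fun l' x' h' => h.maximal l' x' (h'.mono fun i β => le_add_of_nonneg_right hε.1.le)⟩, rfl⟩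
  exact ⟨l, x, h, heq, hmax⟩

theorem tIsEig_ofReal (hx : x ≠ 0) (h : ∀ i, tapp T x i = l * x i ^ k) : TIsEig T (l : ℂ) := by
  refine ⟨fun i => x i, fun hx' => hx (funext fun i => ?_), fun i => ?_⟩
  · exact Complex.ofReal_eq_zero.1 (congrFun hx' i)
  · simpa [tapp] using congrArg (fun r : ℝ => (r : ℂ)) (h i)

theorem exists_isSubEigenpair_norm_of_tIsEig (hT : TNonneg T) {lam : ℂ} (h : TIsEig T lam) :
    ∃ x, IsSubEigenpair T ‖lam‖ x := by
  obtain ⟨z, hz, h⟩ := h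
  refine exists_isSubEigenpair_of_forall_le (x := fun i => ‖z i‖) (norm_nonneg lam)
    (fun i => norm_nonneg (z i))
    (fun hz' => hz (funext fun i => norm_eq_zero.1 (congrFun hz' i))) fun i => ?_
  calc ‖lam‖ * ‖z i‖ ^ k = ‖∑ β : Fin k → ι, (T i β : ℂ) * ∏ r, z (β r)‖ := by
        rw [h i, norm_mul, norm_pow]
    _ ≤ ∑ β : Fin k → ι, ‖(T i β : ℂ) * ∏ r, z (β r)‖ := norm_sum_le _ _
    _ = tapp T (fun i => ‖z i‖) i := by
        simp only [tapp, norm_mul, norm_prod, Complex.norm_of_nonneg (hT i _)]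

theorem IsPerronPair.tIsEig (h : IsPerronPair T l x) : TIsEig T (l : ℂ) :=
  tIsEig_ofReal (ne_zero_of_mem_stdSimplex h.mem_stdSimplex) h.tapp_eq

theorem IsPerronPair.specRad_eq (hT : TNonneg T) (h : IsPerronPair T l x) : specRad T = l := by
  refine IsGreatest.csSup_eq ⟨⟨l, h.tIsEig, (Complex.norm_of_nonneg h.nonneg).symm⟩, ?_⟩
  rintro _ ⟨lam, hlam, rfl⟩
  obtain ⟨y, hy⟩ := exists_isSubEigenpair_norm_of_tIsEig hT hlam
  exact h.maximal _ y hy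

end

theorem specRad_is_eigenvalue_with_nonneg_eigenvector
    (m n : ℕ) (hm : 2 ≤ m) (hn : 2 ≤ n)
    (T : Fin n → (Fin (m - 1) → Fin n) → ℝ) (hT : TNonneg T) :
    TIsEig T (specRad T : ℂ) ∧
      ∃ x : Fin n → ℝ, x ≠ 0 ∧ (∀ i, 0 ≤ x i) ∧
        ∀ i, tapp T x i = specRad T * x i ^ (m - 1) := by
  have : Nonempty (Fin n) := ⟨⟨0, by lia⟩⟩
  obtain ⟨l, x, h⟩ := exists_isPerronPair (by lia) hT
  rw [h.specRad_eq hT]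
  exact ⟨h.tIsEig, x, ne_zero_of_mem_stdSimplex h.mem_stdSimplex, h.mem_stdSimplex.1, h.tapp_eq⟩
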